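/- Suppose (b̃_n) is a sequence of positive reals with lim_n (b_n − b̃_n)/a_n = 0, and (ã_n) is a sequence of positive reals for which there exists M₀ > 0 with |ã_n − 1/(C τ b̃_n^{τ−1})| ≤ M₀ / b̃_n^{2τ−1} for all large n. Then for every x ∈ ℝ there exist a constant M > 0 and an index N such that for all n ≥ N, |F(ã_n x + b̃_n)^n − Λ(x)| ≤ M (|b_n^τ − b̃_n^τ| + |(b̃_n/b_n)^α − 1| + 1/b_n^τ). -/

import Mathlib

open Filter Set

/-!
Write `y = ã_n x + b̃_n` and `t_n = n (1 - F y)`. Since the tail equals `1 / n` at `b_n`,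
`t_n = (y / b_n) ^ α * exp (C (b_n ^ τ - y ^ τ))`. The condition on `ã_n` says
`y / b̃_n = 1 + x / (C τ b̃_n ^ τ) + O(b̃_n ^ (-2τ))`, and expanding the `τ`-th power to second
order gives `y ^ τ = b̃_n ^ τ + x / C + O(b̃_n ^ (-τ))`. Both factors of `t_n` are therefore
known up to the error scale, so `t_n = exp (-x)` up to that scale. Finally
`(1 - t_n / n) ^ n = exp (-t_n) + O(1 / n)`, and `1 / n`, being the tail at `b_n`, is smaller
than any power of `b_n`.
-/

open Asymptotics Topology

theorem tendsto_atTop_of_antitoneOn {ι β γ : Type*} [LinearOrder β] [LinearOrder γ]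
    [TopologicalSpace γ] [ClosedIciTopology γ] {l : Filter ι} {f : β → γ} {u : ι → β} {x₀ : β}
    {c : γ} (hf : AntitoneOn f (Ici x₀)) (hc : ∀ x ≥ x₀, c < f x) (hu : ∀ᶠ i in l, x₀ ≤ u i)
    (hfu : Tendsto (fun i => f (u i)) l (𝓝 c)) : Tendsto u l atTop := by
  refine tendsto_atTop.2 fun A => ?_
  have hA : x₀ ≤ max A x₀ := le_max_right A x₀
  filter_upwards [hu, hfu.eventually_lt_const (hc _ hA)] with i hi hlt
  by_contra! hiA
  exact (hf hi hA (hiA.le.trans (le_max_left A x₀))).not_gt hlt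

theorem abs_one_add_sub_exp_le (x : ℝ) : |1 + x - Real.exp x| ≤ x ^ 2 * Real.exp |x| := by
  have hcomplex : ‖Complex.exp x - (1 + x)‖ ≤ x ^ 2 * Real.exp |x| := by
    simpa [Finset.sum_range_succ] using Complex.norm_exp_sub_sum_le_norm_mul_exp x 2
  rw [abs_sub_comm]
  exact_mod_cast hcomplex

theorem abs_one_add_div_pow_sub_exp_le (x : ℝ) {n : ℕ} (hn : n ≠ 0) :
    |(1 + x / n) ^ n - Real.exp x| ≤ x ^ 2 / n * Real.exp |x| := by
  obtain ⟨m, rfl⟩ := Nat.exists_eq_succ_of_ne_zero hn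
  set z : ℝ := x / (m + 1 : ℕ) with hz
  have hx : x = (m + 1 : ℕ) * z := by rw [hz]; field_simp
  have hmax : max |1 + z| |Real.exp z| ≤ Real.exp |z| := by
    refine max_le ((abs_add_le 1 z).trans ?_) ?_
    · rw [abs_one, add_comm]
      exact Real.add_one_le_exp |z|
    · rw [Real.abs_exp]
      exact Real.exp_le_exp.2 (le_abs_self z)
  calc |(1 + z) ^ (m + 1) - Real.exp x|
      = |(1 + z) ^ (m + 1) - Real.exp z ^ (m + 1)| := by rw [hx, Real.exp_nat_mul]
    _ ≤ |1 + z - Real.exp z| * (m + 1 : ℕ) * max |1 + z| |Real.exp z| ^ m :=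
        abs_pow_sub_pow_le ..
    _ ≤ z ^ 2 * Real.exp |z| * (m + 1 : ℕ) * Real.exp |z| ^ m := by
        gcongr
        exact abs_one_add_sub_exp_le z
    _ = x ^ 2 / (m + 1 : ℕ) * Real.exp |z| ^ (m + 1) := by rw [hx]; field_simp; ring
    _ = x ^ 2 / (m + 1 : ℕ) * Real.exp |x| := by
        rw [← Real.exp_nat_mul, hx, abs_mul, Nat.abs_cast]

theorem isBigO_one_add_div_pow_sub_exp {t : ℕ → ℝ} (ht : t =O[atTop] fun _ => (1 : ℝ)) :
    (fun n => (1 + t n / n) ^ n - Real.exp (t n)) =O[atTop] fun n => 1 / (n : ℝ) := by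
  have hexp : (fun n => Real.exp |t n|) =O[atTop] fun _ => (1 : ℝ) :=
    Real.isBigO_exp_comp_one.2 ((isBigO_one_iff ℝ).1 ht)
  refine IsBigO.trans (.of_bound' ?_)
    (((ht.pow 2).mul hexp).mul (isBigO_refl (fun n : ℕ => 1 / (n : ℝ)) atTop) |>.congr_right
      fun n => by ring)
  filter_upwards [eventually_ne_atTop 0] with n hn
  rw [Real.norm_eq_abs, Real.norm_of_nonneg (by positivity)]
  exact (abs_one_add_div_pow_sub_exp_le (t n) hn).trans_eq (by ring)

theorem isBigO_rpow_sub_one_sub_mul (p : ℝ) :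
    (fun v : ℝ => v ^ p - 1 - p * (v - 1)) =O[𝓝 1] fun v => (v - 1) ^ 2 := by
  have hbinom := (Real.one_add_rpow_hasFPowerSeriesAt_zero (a := p)).isBigO_sub_partialSum_pow 2
  have hsub : Tendsto (fun v : ℝ => v - 1) (𝓝 1) (𝓝 0) := by
    simpa using (continuous_sub_right (1 : ℝ)).tendsto 1
  have hpartial (z : ℝ) : (binomialSeries ℝ p).partialSum 2 z = 1 + p * z := by
    simp [FormalMultilinearSeries.partialSum, Finset.sum_range_succ, binomialSeries, mul_comm]
  refine (hbinom.comp_tendsto hsub).congr (fun v => ?_) (fun v => ?_)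
  · rw [Function.comp_apply, hpartial, zero_add, add_sub_cancel, sub_sub]
  · rw [Function.comp_apply, Real.norm_eq_abs, sq_abs]

section IsBigO

variable {ι : Type*} {l : Filter ι}

theorem isBigO_mul_sub_mul {A : Type*} [SeminormedRing A] {f g : ι → A} {a b : A} {R : ι → ℝ}
    (hf : (fun i => f i - a) =O[l] R) (hg : (fun i => g i - b) =O[l] R)
    (hR : R =O[l] fun _ => (1 : ℝ)) : (fun i => f i * g i - a * b) =O[l] R := by
  have hg_one : g =O[l] fun _ => (1 : ℝ) :=
    ((hg.trans hR).add (isBigO_const_const b one_ne_zero l)).congr_left fun i => by simp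
  have hleft : (fun i => (f i - a) * g i) =O[l] R := by simpa using hf.mul hg_one
  exact (hleft.add (hg.const_mul_left a)).congr_left fun i => by noncomm_ring

theorem isBigO_comp_sub_of_differentiableAt {𝕜 E F : Type*} [NontriviallyNormedField 𝕜]
    [NormedAddCommGroup E] [NormedSpace 𝕜 E] [NormedAddCommGroup F] [NormedSpace 𝕜 F]
    {f : E → F} {c : E} {u : ι → E} {R : ι → ℝ} (hf : DifferentiableAt 𝕜 f c)
    (hu : (fun i => u i - c) =O[l] R) (hR : Tendsto R l (𝓝 0)) :
    (fun i => f (u i) - f c) =O[l] R :=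
  (hf.isBigO_sub.comp_tendsto (tendsto_sub_nhds_zero_iff.1 (hu.trans_tendsto hR))).trans hu

theorem isBigO_of_isBigO_sub_const_mul {u r : ι → ℝ} {c : ℝ} (hr : Tendsto r l (𝓝 0))
    (hu : (fun i => u i - c * r i) =O[l] fun i => r i ^ 2) : u =O[l] r := by
  have hsq : (fun i => r i ^ 2) =O[l] r := by
    simpa [sq] using (hr.isBigO_one ℝ).mul (isBigO_refl r l)
  simpa using (hu.trans hsq).add ((isBigO_refl r l).const_mul_left c)

theorem isEquivalent_of_isBigO_div_sub_one {u v r : ι → ℝ} (hv : ∀ᶠ i in l, v i ≠ 0)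
    (hr : Tendsto r l (𝓝 0)) (huv : (fun i => u i / v i - 1) =O[l] r) : u ~[l] v :=
  (isEquivalent_iff_tendsto_one hv).2 (tendsto_sub_nhds_zero_iff.1 (huv.trans_tendsto hr))

theorem isBigO_rpow_sub_one_sub_const_mul {v r : ι → ℝ} {c : ℝ} (p : ℝ) (hr : Tendsto r l (𝓝 0))
    (hv : (fun i => v i - 1 - c * r i) =O[l] fun i => r i ^ 2) :
    (fun i => v i ^ p - 1 - p * c * r i) =O[l] fun i => r i ^ 2 := by
  have hv_one : (fun i => v i - 1) =O[l] r := isBigO_of_isBigO_sub_const_mul hr hv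
  have hv_lim : Tendsto v l (𝓝 1) := tendsto_sub_nhds_zero_iff.1 (hv_one.trans_tendsto hr)
  refine ((((isBigO_rpow_sub_one_sub_mul p).comp_tendsto hv_lim).trans (hv_one.pow 2)).add
    (hv.const_mul_left p)).congr_left fun i => ?_
  simp only [Function.comp_apply]
  ring

theorem isBigO_one_sub_div_pow_sub_exp_neg {t R : ℕ → ℝ} {c : ℝ}
    (ht : (fun n => t n - c) =O[atTop] R) (hR : Tendsto R atTop (𝓝 0))
    (hnR : (fun n : ℕ => 1 / (n : ℝ)) =O[atTop] R) :
    (fun n => (1 - t n / n) ^ n - Real.exp (-c)) =O[atTop] R := by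
  have ht_lim : Tendsto t atTop (𝓝 c) := tendsto_sub_nhds_zero_iff.1 (ht.trans_tendsto hR)
  have hpow := (isBigO_one_add_div_pow_sub_exp (ht_lim.neg.isBigO_one ℝ)).trans hnR
  have hexp : (fun n => Real.exp (-t n) - Real.exp (-c)) =O[atTop] R :=
    isBigO_comp_sub_of_differentiableAt (𝕜 := ℝ) (f := fun v => Real.exp (-v)) (by fun_prop) ht hR
  exact (hpow.add hexp).congr_left fun n => by ring

end IsBigO

/-- The tail `1 - F` of the generalized Weibull distribution function `F`, as a function on all of
`ℝ`; only its values at large positive `x` are meaningful. -/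
noncomputable def weibullTail (K C α τ x : ℝ) : ℝ :=
  K * x ^ α * Real.exp (-C * x ^ τ)

theorem isLittleO_weibullTail_rpow {C τ : ℝ} (K α : ℝ) (hC : 0 < C) (hτ : 0 < τ) (s : ℝ) :
    weibullTail K C α τ =o[atTop] fun x => x ^ s := by
  have hexp : (fun x : ℝ => Real.exp (-C * x ^ τ)) =o[atTop] fun x => (x ^ τ) ^ ((s - α) / τ) :=
    (isLittleO_exp_neg_mul_rpow_atTop hC _).comp_tendsto (tendsto_rpow_atTop hτ)
  refine ((isBigO_const_mul_self K (fun x : ℝ => x ^ α) atTop).mul_isLittleO hexp).congr' .rfl ?_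
  filter_upwards [eventually_gt_atTop 0] with x hx
  rw [← Real.rpow_mul hx.le, mul_div_cancel₀ _ hτ.ne', ← Real.rpow_add hx, add_sub_cancel]

/-- The quotient of the generalized Weibull tails at `y` and `b`, with the common factor `K`
cancelled. Along `b = b_n`, where the tail is `1 / n`, it is `n (1 - F y)`. -/
noncomputable def weibullTailRatio (C α τ y b : ℝ) : ℝ :=
  (y / b) ^ α * Real.exp (C * (b ^ τ - y ^ τ))

theorem weibullTail_eq_mul_weibullTailRatio (K C α τ : ℝ) {y b : ℝ} (hy : 0 < y) (hb : 0 < b) :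
    weibullTail K C α τ y = weibullTail K C α τ b * weibullTailRatio C α τ y b := by
  have hexp : Real.exp (-C * y ^ τ) = Real.exp (-C * b ^ τ) * Real.exp (C * (b ^ τ - y ^ τ)) := by
    rw [← Real.exp_add]
    ring_nf
  rw [weibullTail, weibullTail, weibullTailRatio, hexp, Real.div_rpow hy.le hb.le]
  field_simp

/-- The error scale of the Gumbel approximation, for the exact and the approximate location
parameters `b = b_n` and `b' = b̃_n`. -/
noncomputable def weibullError (α τ b b' : ℝ) : ℝ :=
  |b ^ τ - b' ^ τ| + |(b' / b) ^ α - 1| + 1 / b ^ τ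

section Location

variable {ι : Type*} {l : Filter ι} {C α τ : ℝ} {b b' : ι → ℝ}

theorem weibullError_nonneg {x : ℝ} (hx : 0 ≤ x) (y : ℝ) : 0 ≤ weibullError α τ x y := by
  unfold weibullError
  positivity

theorem tendsto_one_div_rpow_atTop (hτ : 0 < τ) (hb : Tendsto b l atTop) :
    Tendsto (fun i => 1 / b i ^ τ) l (𝓝 0) := by
  simp only [one_div]
  exact ((tendsto_rpow_atTop hτ).comp hb).inv_tendsto_atTop

theorem tendsto_div_sub_one_mul_rpow {a : ι → ℝ} (hC : 0 < C) (hτ : 0 < τ)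
    (hb : Tendsto b l atTop) (ha : ∀ i, a i = 1 / (C * τ * b i ^ (τ - 1) - α / b i))
    (hbb' : Tendsto (fun i => (b i - b' i) / a i) l (𝓝 0)) :
    Tendsto (fun i => (b' i / b i - 1) * b i ^ τ) l (𝓝 0) := by
  have hrpow : Tendsto (fun i => b i ^ τ) l atTop := (tendsto_rpow_atTop hτ).comp hb
  have hα : (fun _ => α) =o[l] fun i => C * τ * b i ^ τ :=
    isLittleO_const_left.2 <| .inr <|
      tendsto_norm_atTop_atTop.comp (hrpow.const_mul_atTop (mul_pos hC hτ))
  have hrpow_bigO : (fun i => b i ^ τ) =O[l] fun i => C * τ * b i ^ τ - α :=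
    (isBigO_self_const_mul (mul_pos hC hτ).ne' _ l).trans hα.right_isBigO_sub
  have hprod : Tendsto (fun i => (b' i / b i - 1) * (C * τ * b i ^ τ - α)) l (𝓝 0) := by
    rw [← neg_zero]
    refine hbb'.neg.congr' ?_
    filter_upwards [hb.eventually_gt_atTop 0] with i hi
    rw [ha, Real.rpow_sub_one hi.ne']
    field_simp
    ring
  exact ((isBigO_refl _ l).mul hrpow_bigO).trans_tendsto hprod

theorem isEquivalent_of_tendsto_div_sub_one_mul_rpow (hτ : 0 < τ) (hb : Tendsto b l atTop)
    (hlim : Tendsto (fun i => (b' i / b i - 1) * b i ^ τ) l (𝓝 0)) : b' ~[l] b := by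
  refine (isEquivalent_iff_tendsto_one (hb.eventually_ne_atTop 0)).2 ?_
  refine tendsto_sub_nhds_zero_iff.1 ?_
  refine (mul_zero (0 : ℝ) ▸ hlim.mul (tendsto_one_div_rpow_atTop hτ hb)).congr' ?_
  filter_upwards [hb.eventually_gt_atTop 0] with i hi
  simp only [Pi.div_apply]
  field_simp

theorem tendsto_atTop_of_tendsto_div_sub_one_mul_rpow (hτ : 0 < τ) (hb : Tendsto b l atTop)
    (hlim : Tendsto (fun i => (b' i / b i - 1) * b i ^ τ) l (𝓝 0)) : Tendsto b' l atTop :=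
  (isEquivalent_of_tendsto_div_sub_one_mul_rpow hτ hb hlim).symm.tendsto_atTop hb

theorem isBigO_one_div_rpow_of_isEquivalent (hτ : 0 ≤ τ) (hb : Tendsto b l atTop)
    (hbb' : b' ~[l] b) : (fun i => 1 / b' i ^ τ) =O[l] fun i => 1 / b i ^ τ := by
  have hb' : Tendsto b' l atTop := hbb'.symm.tendsto_atTop hb
  simp only [one_div]
  refine (hbb'.isBigO_symm.rpow hτ (hb'.eventually_ge_atTop 0)).inv_rev ?_
  filter_upwards [hb.eventually_gt_atTop 0] with i hi h
  exact absurd h (Real.rpow_pos_of_pos hi τ).ne'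

theorem tendsto_rpow_sub_rpow (hb : Tendsto b l atTop) (hbb' : b' ~[l] b)
    (hlim : Tendsto (fun i => (b' i / b i - 1) * b i ^ τ) l (𝓝 0)) :
    Tendsto (fun i => b i ^ τ - b' i ^ τ) l (𝓝 0) := by
  have hdiv : Tendsto (b' / b) l (𝓝 1) :=
    (isEquivalent_iff_tendsto_one (hb.eventually_ne_atTop 0)).1 hbb'
  have hdiff : DifferentiableAt ℝ (fun v : ℝ => v ^ τ) 1 :=
    Real.differentiableAt_rpow_const_of_ne τ one_ne_zero
  have hbigO := (hdiff.isBigO_sub.comp_tendsto hdiv).mul (isBigO_refl (fun i => b i ^ τ) l)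
  refine (neg_zero (G := ℝ) ▸ (hbigO.trans_tendsto hlim).neg).congr' ?_
  filter_upwards [hb.eventually_gt_atTop 0,
    (hbb'.symm.tendsto_atTop hb).eventually_gt_atTop 0] with i hi hi'
  simp only [Function.comp_apply, Pi.div_apply, Real.one_rpow]
  rw [Real.div_rpow hi'.le hi.le]
  field_simp
  ring

theorem tendsto_weibullError (hτ : 0 < τ) (hb : Tendsto b l atTop)
    (hlim : Tendsto (fun i => (b' i / b i - 1) * b i ^ τ) l (𝓝 0)) :
    Tendsto (fun i => weibullError α τ (b i) (b' i)) l (𝓝 0) := by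
  have hbb' := isEquivalent_of_tendsto_div_sub_one_mul_rpow hτ hb hlim
  have hdiv : Tendsto (b' / b) l (𝓝 1) :=
    (isEquivalent_iff_tendsto_one (hb.eventually_ne_atTop 0)).1 hbb'
  have hrpow : Tendsto (fun i => (b' i / b i) ^ α - 1) l (𝓝 0) := by
    simpa using (hdiv.rpow_const (p := α) (.inl one_ne_zero)).sub_const 1
  simpa [weibullError] using
    ((tendsto_rpow_sub_rpow hb hbb' hlim).abs.add hrpow.abs).add (tendsto_one_div_rpow_atTop hτ hb)

theorem isBigO_rpow_sub_weibullError (hb : ∀ᶠ i in l, 0 ≤ b i) :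
    (fun i => b i ^ τ - b' i ^ τ) =O[l] fun i => weibullError α τ (b i) (b' i) := by
  refine .of_norm_eventuallyLE ?_
  filter_upwards [hb] with i hi
  rw [weibullError, add_assoc, Real.norm_eq_abs]
  exact le_add_of_nonneg_right (by positivity)

theorem isBigO_div_rpow_sub_one_weibullError (hb : ∀ᶠ i in l, 0 ≤ b i) :
    (fun i => (b' i / b i) ^ α - 1) =O[l] fun i => weibullError α τ (b i) (b' i) := by
  refine .of_norm_eventuallyLE ?_
  filter_upwards [hb] with i hi
  rw [weibullError, add_right_comm, Real.norm_eq_abs]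
  exact le_add_of_nonneg_left (by positivity)

theorem isBigO_one_div_rpow_weibullError (hb : ∀ᶠ i in l, 0 ≤ b i) :
    (fun i => 1 / b i ^ τ) =O[l] fun i => weibullError α τ (b i) (b' i) := by
  refine .of_norm_eventuallyLE ?_
  filter_upwards [hb] with i hi
  rw [weibullError, Real.norm_of_nonneg (by positivity)]
  exact le_add_of_nonneg_left (by positivity)

theorem isBigO_affine_div_sub {a' : ι → ℝ} (x : ℝ) (hb' : ∀ᶠ i in l, 0 < b' i)
    (ha' : (fun i => a' i - 1 / (C * τ * b' i ^ (τ - 1))) =O[l] fun i => 1 / b' i ^ (2 * τ - 1)) :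
    (fun i => (a' i * x + b' i) / b' i - 1 - x / (C * τ) * (1 / b' i ^ τ)) =O[l]
      fun i => (1 / b' i ^ τ) ^ 2 := by
  refine ((ha'.const_mul_left x).mul (isBigO_refl (fun i => 1 / b' i) l)).congr' ?_ ?_
  · filter_upwards [hb'] with i hi
    rw [Real.rpow_sub_one hi.ne']
    field_simp
    ring
  · filter_upwards [hb'] with i hi
    rw [Real.rpow_sub_one hi.ne', mul_comm 2 τ, Real.rpow_mul hi.le, Real.rpow_two]
    field_simp

theorem isBigO_rpow_sub_rpow_sub_mul {y : ι → ℝ} {c : ℝ} (hτ : 0 < τ) (hb' : Tendsto b' l atTop)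
    (hy_nonneg : ∀ᶠ i in l, 0 ≤ y i)
    (hy : (fun i => y i / b' i - 1 - c * (1 / b' i ^ τ)) =O[l] fun i => (1 / b' i ^ τ) ^ 2) :
    (fun i => y i ^ τ - b' i ^ τ - τ * c) =O[l] fun i => 1 / b' i ^ τ := by
  have hexpand := isBigO_rpow_sub_one_sub_const_mul τ (tendsto_one_div_rpow_atTop hτ hb') hy
  refine ((isBigO_refl (fun i => b' i ^ τ) l).mul hexpand).congr' ?_ ?_
  · filter_upwards [hb'.eventually_gt_atTop 0, hy_nonneg] with i hi hyi
    rw [Real.div_rpow hyi hi.le]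
    field_simp
  · filter_upwards [hb'.eventually_gt_atTop 0] with i hi
    field_simp

theorem isBigO_div_rpow_sub_one {y : ι → ℝ} (hb : ∀ᶠ i in l, 0 ≤ b i) (hb' : ∀ᶠ i in l, 0 < b' i)
    (hy : ∀ᶠ i in l, 0 ≤ y i) (hR : Tendsto (fun i => weibullError α τ (b i) (b' i)) l (𝓝 0))
    (hyb' : (fun i => y i / b' i - 1) =O[l] fun i => weibullError α τ (b i) (b' i)) :
    (fun i => (y i / b i) ^ α - 1) =O[l] fun i => weibullError α τ (b i) (b' i) := by
  have hyb'_rpow : (fun i => (y i / b' i) ^ α - 1) =O[l]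
      fun i => weibullError α τ (b i) (b' i) := by
    simpa only [Real.one_rpow] using isBigO_comp_sub_of_differentiableAt
      (Real.differentiableAt_rpow_const_of_ne α one_ne_zero) hyb' hR
  have hprod := isBigO_mul_sub_mul hyb'_rpow (isBigO_div_rpow_sub_one_weibullError hb)
    (hR.isBigO_one ℝ)
  refine hprod.congr' ?_ .rfl
  filter_upwards [hb, hb', hy] with i hi hi' hyi
  rw [← Real.mul_rpow (by positivity) (by positivity), div_mul_div_cancel₀ hi'.ne', one_mul]

theorem isBigO_exp_rpow_sub_rpow_sub_exp_neg {y : ι → ℝ} {x : ℝ} (hC : C ≠ 0)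
    (hb : ∀ᶠ i in l, 0 ≤ b i) (hR : Tendsto (fun i => weibullError α τ (b i) (b' i)) l (𝓝 0))
    (hy : (fun i => y i ^ τ - b' i ^ τ - x / C) =O[l] fun i => weibullError α τ (b i) (b' i)) :
    (fun i => Real.exp (C * (b i ^ τ - y i ^ τ)) - Real.exp (-x)) =O[l]
      fun i => weibullError α τ (b i) (b' i) := by
  refine isBigO_comp_sub_of_differentiableAt Real.differentiableAt_exp ?_ hR
  refine (((isBigO_rpow_sub_weibullError hb).sub hy).const_mul_left C).congr_left fun i => ?_
  field_simp
  ring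

theorem isBigO_weibullTailRatio_sub_exp_neg {y : ι → ℝ} {x : ℝ} (hC : C ≠ 0) (hτ : 0 < τ)
    (hb : Tendsto b l atTop)
    (hlim : Tendsto (fun i => (b' i / b i - 1) * b i ^ τ) l (𝓝 0))
    (hy : (fun i => y i / b' i - 1 - x / (C * τ) * (1 / b' i ^ τ)) =O[l]
      fun i => (1 / b' i ^ τ) ^ 2) :
    (fun i => weibullTailRatio C α τ (y i) (b i) - Real.exp (-x)) =O[l]
      fun i => weibullError α τ (b i) (b' i) := by
  have hb'b : b' ~[l] b := isEquivalent_of_tendsto_div_sub_one_mul_rpow hτ hb hlim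
  have hb' : Tendsto b' l atTop := tendsto_atTop_of_tendsto_div_sub_one_mul_rpow hτ hb hlim
  have hb_nonneg : ∀ᶠ i in l, 0 ≤ b i := hb.eventually_ge_atTop 0
  have hR := tendsto_weibullError (α := α) hτ hb hlim
  have hinv : (fun i => 1 / b' i ^ τ) =O[l] fun i => weibullError α τ (b i) (b' i) :=
    (isBigO_one_div_rpow_of_isEquivalent hτ.le hb hb'b).trans
      (isBigO_one_div_rpow_weibullError hb_nonneg)
  have hinv_lim := tendsto_one_div_rpow_atTop hτ hb'
  have hy_div : (fun i => y i / b' i - 1) =O[l] fun i => 1 / b' i ^ τ :=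
    isBigO_of_isBigO_sub_const_mul hinv_lim hy
  have hy_top : Tendsto y l atTop := (isEquivalent_of_isBigO_div_sub_one
    (hb'.eventually_ne_atTop 0) hinv_lim hy_div).symm.tendsto_atTop hb'
  have hy_nonneg : ∀ᶠ i in l, 0 ≤ y i := hy_top.eventually_ge_atTop 0
  have hy_rpow : (fun i => y i ^ τ - b' i ^ τ - x / C) =O[l] fun i => 1 / b' i ^ τ :=
    (isBigO_rpow_sub_rpow_sub_mul hτ hb' hy_nonneg hy).congr_left fun i => by field_simp
  simpa only [weibullTailRatio, one_mul] using
    isBigO_mul_sub_mul (isBigO_div_rpow_sub_one hb_nonneg (hb'.eventually_gt_atTop 0) hy_nonneg hR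
      (hy_div.trans hinv)) (isBigO_exp_rpow_sub_rpow_sub_exp_neg hC hb_nonneg hR
      (hy_rpow.trans hinv)) (hR.isBigO_one ℝ)

end Location

theorem isBigO_pow_sub_gumbel {K C α τ : ℝ} (hC : 0 < C) (hτ : 0 < τ) {F : ℝ → ℝ}
    (hF : ∀ᶠ y in atTop, F y = 1 - weibullTail K C α τ y) {b b' y : ℕ → ℝ} {x : ℝ}
    (hb : Tendsto b atTop atTop) (hbn : ∀ᶠ n in atTop, weibullTail K C α τ (b n) = 1 / (n : ℝ))
    (hlim : Tendsto (fun n => (b' n / b n - 1) * b n ^ τ) atTop (𝓝 0))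
    (hy : (fun n => y n / b' n - 1 - x / (C * τ) * (1 / b' n ^ τ)) =O[atTop]
      fun n => (1 / b' n ^ τ) ^ 2) :
    (fun n => F (y n) ^ n - Real.exp (-Real.exp (-x))) =O[atTop]
      fun n => weibullError α τ (b n) (b' n) := by
  have hy_lim : Tendsto y atTop atTop := by
    have hb' := tendsto_atTop_of_tendsto_div_sub_one_mul_rpow hτ hb hlim
    have hinv := tendsto_one_div_rpow_atTop hτ hb'
    exact (isEquivalent_of_isBigO_div_sub_one (hb'.eventually_ne_atTop 0) hinv
      (isBigO_of_isBigO_sub_const_mul hinv hy)).symm.tendsto_atTop hb'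
  have hn : (fun n : ℕ => 1 / (n : ℝ)) =O[atTop] fun n => weibullError α τ (b n) (b' n) := by
    refine .trans ?_ (isBigO_one_div_rpow_weibullError (hb.eventually_ge_atTop 0))
    refine ((isLittleO_weibullTail_rpow K α hC hτ (-τ)).comp_tendsto hb).isBigO.congr' hbn ?_
    filter_upwards [hb.eventually_ge_atTop 0] with n hb_nonneg
    rw [Function.comp_apply, Real.rpow_neg hb_nonneg, one_div]
  refine (isBigO_one_sub_div_pow_sub_exp_neg
    (isBigO_weibullTailRatio_sub_exp_neg hC.ne' hτ hb hlim hy)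
    (tendsto_weibullError hτ hb hlim) hn).congr' ?_ .rfl
  filter_upwards [hy_lim.eventually hF, hbn, hb.eventually_gt_atTop 0,
    hy_lim.eventually_gt_atTop 0] with n hFn hbn hb_pos hy_pos
  rw [hFn, weibullTail_eq_mul_weibullTailRatio K C α τ hy_pos hb_pos, hbn, one_div_mul_eq_div]

theorem stmt_2_general {K C α τ : ℝ} (hC : 0 < C) (hτ : 0 < τ) {F : ℝ → ℝ}
    (hF : ∀ᶠ y in atTop, F y = 1 - weibullTail K C α τ y) {a b a' b' : ℕ → ℝ}
    (hb : Tendsto b atTop atTop) (hbn : ∀ᶠ n in atTop, weibullTail K C α τ (b n) = 1 / (n : ℝ))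
    (ha : ∀ n, a n = 1 / (C * τ * b n ^ (τ - 1) - α / b n))
    (hbb' : Tendsto (fun n => (b n - b' n) / a n) atTop (𝓝 0))
    (ha' : ∃ M₀, ∀ᶠ n in atTop,
      |a' n - 1 / (C * τ * b' n ^ (τ - 1))| ≤ M₀ / b' n ^ (2 * τ - 1)) (x : ℝ) :
    ∃ M > (0 : ℝ), ∃ N : ℕ, ∀ n ≥ N,
      |F (a' n * x + b' n) ^ n - Real.exp (-Real.exp (-x))| ≤
        M * weibullError α τ (b n) (b' n) := by
  have hlim := tendsto_div_sub_one_mul_rpow hC hτ hb ha hbb'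
  have hb' : ∀ᶠ n in atTop, 0 < b' n :=
    (tendsto_atTop_of_tendsto_div_sub_one_mul_rpow hτ hb hlim).eventually_gt_atTop 0
  obtain ⟨M₀, ha'⟩ := ha'
  have ha'_isBigO : (fun n => a' n - 1 / (C * τ * b' n ^ (τ - 1))) =O[atTop]
      fun n => 1 / b' n ^ (2 * τ - 1) := by
    refine .of_bound M₀ ?_
    filter_upwards [ha', hb'] with n hn hpos
    rwa [Real.norm_eq_abs, Real.norm_of_nonneg (by positivity), mul_one_div]
  obtain ⟨M, hM, hbound⟩ := (isBigO_pow_sub_gumbel hC hτ hF hb hbn hlim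
    (isBigO_affine_div_sub x hb' ha'_isBigO)).exists_pos
  refine ⟨M, hM, eventually_atTop.1 ?_⟩
  filter_upwards [hbound.bound, hb.eventually_ge_atTop 0] with n hn hpos
  rwa [Real.norm_of_nonneg (weibullError_nonneg hpos _)] at hn

/-- Theorem 1.2: if `b̃_n > 0` satisfies `(b_n - b̃_n)/a_n → 0` and `ã_n > 0` satisfies
`ã_n = 1/(C τ b̃_n^{τ-1}) + O(1/b̃_n^{2τ-1})`, then
`F(ã_n x + b̃_n)^n = Λ(x)(1 + O(b_n^τ - b̃_n^τ) + O((b̃_n/b_n)^α - 1) + O(1/b_n^τ))`. -/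
theorem stmt_2 (K C α τ x₁ : ℝ) (hK : 0 < K) (hC : 0 < C) (hα : 0 < α) (hτ : 1 ≤ τ)
    (hx₁ : 0 < x₁)
    (hanti : StrictAntiOn (fun x : ℝ => K * x ^ α * Real.exp (-C * x ^ τ)) (Set.Ici x₁))
    (hlim : Tendsto (fun x : ℝ => K * x ^ α * Real.exp (-C * x ^ τ)) atTop (nhds 0))
    (hrange : ∀ x ≥ x₁, K * x ^ α * Real.exp (-C * x ^ τ) ∈ Set.Ioc (0 : ℝ) 1)
    (F : ℝ → ℝ) (hF : ∀ x ≥ x₁, F x = 1 - K * x ^ α * Real.exp (-C * x ^ τ))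
    (b : ℕ → ℝ)
    (hb : ∀ᶠ n : ℕ in atTop,
      x₁ ≤ b n ∧ K * b n ^ α * Real.exp (-C * b n ^ τ) = 1 / (n : ℝ))
    (a : ℕ → ℝ) (ha : ∀ n, a n = 1 / (C * τ * b n ^ (τ - 1) - α / b n))
    (bt : ℕ → ℝ) (hbt : ∀ n, 0 < bt n)
    (hbtlim : Tendsto (fun n => (b n - bt n) / a n) atTop (nhds 0))
    (at' : ℕ → ℝ) (hat : ∀ n, 0 < at' n)
    (hat' : ∃ M₀ > (0 : ℝ), ∀ᶠ n : ℕ in atTop,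
      |at' n - 1 / (C * τ * bt n ^ (τ - 1))| ≤ M₀ / bt n ^ (2 * τ - 1)) :
    ∀ x : ℝ, ∃ M > (0 : ℝ), ∃ N : ℕ, ∀ n ≥ N,
      |F (at' n * x + bt n) ^ n - Real.exp (-Real.exp (-x))|
        ≤ M * (|b n ^ τ - bt n ^ τ| + |(bt n / b n) ^ α - 1| + 1 / b n ^ τ) := by
  have hb_top : Tendsto b atTop atTop :=
    tendsto_atTop_of_antitoneOn hanti.antitoneOn (fun y hy => (hrange y hy).1)
      (hb.mono fun _ h => h.1)
      (tendsto_one_div_atTop_nhds_zero_nat.congr' (hb.mono fun _ h => h.2.symm))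
  exact stmt_2_general hC (zero_lt_one.trans_le hτ) ((eventually_ge_atTop x₁).mono hF) hb_top
    (hb.mono fun _ h => h.2) ha hbtlim (hat'.imp fun _ h => h.2)
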